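/- Let S = ⟨n₁,n₂,n₃,n₄⟩ be an almost symmetric numerical semigroup. Then the type of S is at most 4. -/

import Mathlib

/-- The numerical semigroup generated by `n`, viewed inside `ℤ`. -/
def NS {e : ℕ} (n : Fin e → ℕ) : Set ℤ :=
  {x | ∃ a : Fin e → ℕ, x = ∑ j, (a j : ℤ) * n j}

/-- Pseudo-Frobenius numbers of the numerical semigroup generated by `n`. -/
def PF {e : ℕ} (n : Fin e → ℕ) : Set ℤ :=
  {x | x ∉ NS n ∧ ∀ i, x + (n i : ℤ) ∈ NS n}

/-- `F` is the Frobenius number: the maximum of `ℤ \ S`. -/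
def IsFrob {e : ℕ} (n : Fin e → ℕ) (F : ℤ) : Prop :=
  F ∉ NS n ∧ ∀ x : ℤ, F < x → x ∈ NS n

/-- Almost symmetry with respect to the Frobenius number `F`. -/
def AlmostSym {e : ℕ} (n : Fin e → ℕ) (F : ℤ) : Prop :=
  ∀ x : ℤ, x ∉ NS n → F - x ∉ NS n → (x ∈ PF n ∧ F - x ∈ PF n)

/-- `A` is an RF-matrix for `f`. -/
def IsRF {e : ℕ} (n : Fin e → ℕ) (f : ℤ) (A : Matrix (Fin e) (Fin e) ℤ) : Prop :=
  (∀ i, A i i = -1) ∧ (∀ i j, i ≠ j → 0 ≤ A i j) ∧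
    (∀ i, ∑ j, A i j * (n j : ℤ) = f)

/-- `K = λ_{ij} = max {K ∈ ℕ : K·n_j - n_i ∉ S}`. -/
def IsLam {e : ℕ} (n : Fin e → ℕ) (i j : Fin e) (K : ℕ) : Prop :=
  ((K : ℤ) * n j - n i ∉ NS n) ∧
    ∀ L : ℕ, ((L : ℤ) * n j - n i ∉ NS n) → L ≤ K

/-- `n` is a minimal generating system. -/
def MinGen {e : ℕ} (n : Fin e → ℕ) : Prop :=
  ∀ i, ¬ ∃ a : Fin e → ℕ, a i = 0 ∧ (n i : ℤ) = ∑ j, (a j : ℤ) * n j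

/-!
Let `S` be the semigroup, `e` the number of generators, `P` the set of pseudo-Frobenius numbers
other than `F`, and `p` the size of `P`. By almost symmetry `f ↦ F - f` preserves `P`. For a value
`s = f + n i` with `f ∈ P`, let `σ s` be the number of `k` with `s - n k ∈ S`, and `r s` the number
of `k` with `s - n k ∈ P`. Since `S`, `F - S` and `P` are pairwise disjoint, summing over all `f`,
`i`, `k` and using the involution gives `∑ r s * (2 * σ s + r s - e) ≤ 0`, the sum being over the
distinct values `s`. Every value satisfies `σ s ≥ 1`, and at most `e` of them satisfy `σ s = 1`:
such an `s` is a multiple `a * n j` of a single generator, and `j` determines `s`. A value with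
`σ s ≥ 2` contributes at least `r s * (5 - e)`, and one with `σ s = 1` at least
`r s * (5 - e) - 2`, as `(r s - 1) * (r s - 2) ≥ 0`. Since `∑ r s = e * p`, this yields
`(5 - e) * e * p ≤ 2 * e`. For `e = 4` the type `p + 1` is even at most `3`.
-/

open Finset

section Shifts

variable {G ι : Type*} [AddGroup G] [DecidableEq G] [Fintype ι]

/-- The values `f + v i` with `f ∈ P`: the sumset of `P` and the family `v`. -/
def shifts (v : ι → G) (P : Finset G) : Finset G :=
  (P ×ˢ univ).image fun x ↦ x.1 + v x.2

/-- The number `r s` of ways to write `s` as `f + v i` with `f ∈ P`. It is encoded as a number of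
indices, because `i` determines `f`. -/
def shiftCount (v : ι → G) (P : Finset G) (s : G) : ℕ :=
  #{i | s - v i ∈ P}

theorem mem_shifts {v : ι → G} {P : Finset G} {s : G} :
    s ∈ shifts v P ↔ ∃ f ∈ P, ∃ i, f + v i = s := by
  simp [shifts]

theorem card_filter_add_eq_shiftCount (v : ι → G) (P : Finset G) (s : G) :
    #{x ∈ P ×ˢ univ | x.1 + v x.2 = s} = shiftCount v P s := by
  refine card_nbij' Prod.snd (fun i ↦ (s - v i, i)) ?_ ?_ ?_ ?_
  · rintro ⟨f, i⟩ h
    obtain ⟨hf, rfl⟩ : f ∈ P ∧ f + v i = s := by simpa using h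
    simpa using hf
  · intro i h
    simpa using h
  · rintro ⟨f, i⟩ h
    obtain ⟨-, rfl⟩ : f ∈ P ∧ f + v i = s := by simpa using h
    simp
  · intro i _
    rfl

theorem sum_shiftCount_mul {R : Type*} [NonAssocSemiring R] (v : ι → G) (P : Finset G) (φ : G → R) :
    ∑ s ∈ shifts v P, shiftCount v P s * φ s = ∑ f ∈ P, ∑ i, φ (f + v i) := by
  rw [← sum_product', sum_comp φ fun x : G × ι ↦ x.1 + v x.2, shifts]
  simp only [card_filter_add_eq_shiftCount, nsmul_eq_mul]

end Shifts

section Semigroup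

variable {e : ℕ} {n : Fin e → ℕ} {x y : ℤ}

theorem NS_eq_span (n : Fin e → ℕ) : NS n = Submodule.span ℕ (Set.range fun i ↦ (n i : ℤ)) := by
  ext x
  simp [NS, Submodule.mem_span_range_iff_exists_fun, eq_comm]

theorem NS.zero_mem : 0 ∈ NS n := by
  rw [NS_eq_span]
  exact Submodule.zero_mem _

theorem NS.add_mem (hx : x ∈ NS n) (hy : y ∈ NS n) : x + y ∈ NS n := by
  rw [NS_eq_span] at hx hy ⊢
  exact Submodule.add_mem _ hx hy

theorem NS.natCast_mul_mem (a : ℕ) (j : Fin e) : (a : ℤ) * n j ∈ NS n := by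
  rw [NS_eq_span, ← nsmul_eq_mul]
  exact Submodule.smul_mem _ a (Submodule.subset_span ⟨j, rfl⟩)

theorem NS.sum_sub_mem {a : Fin e → ℕ} {j : Fin e} (hj : a j ≠ 0) :
    ∑ k, (a k : ℤ) * n k - n j ∈ NS n := by
  have hle : Pi.single j 1 ≤ a :=
    update_le_iff.2 ⟨Nat.one_le_iff_ne_zero.2 hj, fun _ _ ↦ Nat.zero_le _⟩
  obtain ⟨b, rfl⟩ := exists_add_of_le hle
  exact ⟨b, by simp [add_mul, sum_add_distrib, Pi.single_apply]⟩

open Classical in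
/-- The indices of the generators occurring in some factorization of `x`, that is, those `k` for
which `n k` lies below `x` in the order induced by the semigroup. Its size is `σ x`. -/
noncomputable def genSupport (n : Fin e → ℕ) (x : ℤ) : Finset (Fin e) :=
  {k | x - n k ∈ NS n}

theorem mem_genSupport {k : Fin e} : k ∈ genSupport n x ↔ x - n k ∈ NS n := by
  simp [genSupport]

theorem genSupport_nonempty (hx : x ∈ NS n) (hx0 : x ≠ 0) : (genSupport n x).Nonempty := by
  obtain ⟨a, rfl⟩ := hx
  obtain ⟨k, -, hk⟩ := exists_ne_zero_of_sum_ne_zero hx0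
  have hak : a k ≠ 0 := fun h ↦ hk (by simp [h])
  exact ⟨k, mem_genSupport.2 (NS.sum_sub_mem hak)⟩

theorem exists_eq_mul_of_genSupport_subset (hx : x ∈ NS n) {j : Fin e}
    (h : genSupport n x ⊆ {j}) : ∃ a : ℕ, x = a * n j := by
  obtain ⟨a, rfl⟩ := hx
  refine ⟨a j, sum_eq_single_of_mem j (mem_univ j) fun k _ hkj ↦ ?_⟩
  have hak : a k = 0 := by
    by_contra hak
    exact hkj (mem_singleton.1 (h (mem_genSupport.2 (NS.sum_sub_mem hak))))
  simp [hak]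

end Semigroup

section PseudoFrobenius

variable {e : ℕ} {n : Fin e → ℕ} {F f g : ℤ}

theorem IsFrob.dim_pos (hF : IsFrob n F) : 0 < e := by
  rcases e.eq_zero_or_pos with rfl | he
  · obtain ⟨_, h₁⟩ := hF.2 (F + 1) (by lia)
    obtain ⟨_, h₂⟩ := hF.2 (F + 2) (by lia)
    simp only [univ_eq_empty, sum_empty] at h₁ h₂
    lia
  · exact he

theorem IsFrob.mem_PF (hF : IsFrob n F) (hpos : ∀ i, 0 < n i) : F ∈ PF n :=
  ⟨hF.1, fun i ↦ hF.2 _ (by have := hpos i; lia)⟩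

theorem PF.eq_of_sub_mem_NS (hf : f ∈ PF n) (hg : g ∉ NS n) (hgf : g - f ∈ NS n) : g = f := by
  by_contra hne
  obtain ⟨k, hk⟩ := genSupport_nonempty hgf (sub_ne_zero.2 hne)
  have h := NS.add_mem (hf.2 k) (mem_genSupport.1 hk)
  exact hg (by convert h using 1; ring)

theorem AlmostSym.sub_mem_PF_sdiff (hAS : AlmostSym n F) (hF : F ∉ NS n) (hf : f ∈ PF n \ {F}) :
    F - f ∈ PF n \ {F} := by
  obtain ⟨hfPF, hfF : f ≠ F⟩ := hf
  have hsub : F - f ∉ NS n := fun h ↦ hfF (PF.eq_of_sub_mem_NS hfPF hF h).symm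
  have hf0 : f ≠ 0 := fun h ↦ hfPF.1 (h ▸ NS.zero_mem)
  exact ⟨(hAS f hfPF.1 hsub).2, fun h ↦ hf0 (sub_eq_self.1 h)⟩

theorem AlmostSym.finite_PF_sdiff (hAS : AlmostSym n F) (hF : IsFrob n F) :
    (PF n \ {F}).Finite := by
  have hle : ∀ g ∈ PF n \ {F}, g ≤ F := fun g hg ↦ not_lt.1 fun h ↦ hg.1.1 (hF.2 g h)
  refine (Set.finite_Icc 0 F).subset fun f hf ↦ ⟨?_, hle f hf⟩
  have := hle _ (hAS.sub_mem_PF_sdiff hF.1 hf)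
  lia

/-- If `b` exceeded `a`, then `n i` would occur in `b * n j`, forcing `i = j` and thus `f ∈ S`. -/
theorem coeff_le_of_genSupport_eq_singleton (hf : f ∈ PF n) {i j : Fin e} {a b : ℕ}
    (hs : genSupport n (f + n i) = {j}) (ht : genSupport n (b * n j) = {j})
    (ha : f + n i = a * n j) : b ≤ a := by
  by_contra! hab
  obtain ⟨d, rfl⟩ := Nat.exists_eq_add_of_lt hab
  have hi : i ∈ genSupport n (((a + d + 1 : ℕ) : ℤ) * n j) := by
    have hsub : ((a + d + 1 : ℕ) : ℤ) * n j - n i = f + n j + d * n j := by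
      push_cast
      linear_combination -ha
    rw [mem_genSupport, hsub]
    exact NS.add_mem (hf.2 j) (NS.natCast_mul_mem d j)
  obtain rfl : i = j := by rwa [ht, mem_singleton] at hi
  have hfmem : f + n i - n i ∈ NS n := mem_genSupport.1 (by simp [hs])
  exact hf.1 (by simpa using hfmem)

theorem add_eq_add_of_genSupport_eq_singleton (hf : f ∈ PF n) (hg : g ∈ PF n) {i k j : Fin e}
    (hs : genSupport n (f + n i) = {j}) (ht : genSupport n (g + n k) = {j}) :
    f + n i = g + n k := by
  obtain ⟨a, ha⟩ := exists_eq_mul_of_genSupport_subset (hf.2 i) hs.subset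
  obtain ⟨b, hb⟩ := exists_eq_mul_of_genSupport_subset (hg.2 k) ht.subset
  have hab : a = b := le_antisymm
    (coeff_le_of_genSupport_eq_singleton hg ht (ha ▸ hs) hb)
    (coeff_le_of_genSupport_eq_singleton hf hs (hb ▸ ht) ha)
  rw [ha, hb, hab]

end PseudoFrobenius

section Counting

variable {e : ℕ} {n : Fin e → ℕ} {F : ℤ} {P : Finset ℤ}

theorem card_genSupport_eq_one_le (hP : ∀ f ∈ P, f ∈ PF n) :
    #{s ∈ shifts (fun i ↦ (n i : ℤ)) P | #(genSupport n s) = 1} ≤ e := by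
  calc _ ≤ #(powersetCard 1 (univ : Finset (Fin e))) :=
        card_le_card_of_injOn (genSupport n)
          (fun s hs ↦ by simpa using (mem_filter.1 hs).2) ?_
    _ = e := by simp
  intro s hs t ht hst
  obtain ⟨hs, hs1⟩ := mem_filter.1 hs
  obtain ⟨f, hf, i, rfl⟩ := mem_shifts.1 hs
  obtain ⟨g, hg, k, rfl⟩ := mem_shifts.1 (mem_filter.1 ht).1
  obtain ⟨j, hj⟩ := card_eq_one.1 hs1
  exact add_eq_add_of_genSupport_eq_singleton (hP f hf) (hP g hg) hj (hst ▸ hj)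

theorem genSupport_nonempty_of_mem_shifts (hF : F ∈ PF n) (hP : ∀ f ∈ P, f ∈ PF n)
    (hsymm : ∀ f ∈ P, F - f ∈ P) {s : ℤ} (hs : s ∈ shifts (fun i ↦ (n i : ℤ)) P) :
    (genSupport n s).Nonempty := by
  obtain ⟨f, hf, i, rfl⟩ := mem_shifts.1 hs
  refine genSupport_nonempty ((hP f hf).2 i) fun h0 ↦ ?_
  have hFf : F - f = F + n i := by lia
  exact (hP _ (hsymm f hf)).1 (hFf ▸ hF.2 i)

open Classical in
theorem card_genSupport_add_card_add_shiftCount_le (hF : F ∉ NS n) (hP : ∀ f ∈ P, f ∉ NS n)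
    (hsymm : ∀ f ∈ P, F - f ∈ P) (x : ℤ) :
    #(genSupport n x) + #{k | F - (x - n k) ∈ NS n} + shiftCount (fun i ↦ (n i : ℤ)) P x ≤ e := by
  let A := genSupport n x
  let B : Finset (Fin e) := {k | F - (x - n k) ∈ NS n}
  let C : Finset (Fin e) := {k | x - n k ∈ P}
  have hAB : Disjoint A B :=
    disjoint_filter.2 fun k _ hA hB ↦ hF (by simpa using NS.add_mem hA hB)
  have hAC : Disjoint A C := disjoint_filter.2 fun k _ hA hC ↦ hP _ hC hA
  have hBC : Disjoint B C := disjoint_filter.2 fun k _ hB hC ↦ hP _ (hsymm _ hC) hB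
  calc #A + #B + #C = #(A ∪ B ∪ C) := by
        rw [card_union_of_disjoint (disjoint_union_left.2 ⟨hAC, hBC⟩), card_union_of_disjoint hAB]
    _ ≤ e := (card_le_univ _).trans_eq (Fintype.card_fin e)

open Classical in
theorem sum_card_genSupport_reflect (n : Fin e → ℕ) (hsymm : ∀ f ∈ P, F - f ∈ P) :
    ∑ f ∈ P, ∑ i, #{k | F - (f + n i - n k) ∈ NS n} = ∑ f ∈ P, ∑ i, #(genSupport n (f + n i)) := by
  refine sum_nbij' (F - ·) (F - ·) hsymm hsymm (by simp) (by simp) fun f _ ↦ ?_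
  simp only [genSupport, card_filter]
  rw [sum_comm]
  refine sum_congr rfl fun k _ ↦ sum_congr rfl fun i _ ↦ ?_
  rw [show F - (f + n i - n k) = F - f + n k - n i by ring]

theorem sum_two_mul_card_genSupport_add_shiftCount_le (hF : F ∉ NS n) (hP : ∀ f ∈ P, f ∉ NS n)
    (hsymm : ∀ f ∈ P, F - f ∈ P) :
    ∑ f ∈ P, ∑ i, (2 * #(genSupport n (f + n i)) + shiftCount (fun i ↦ (n i : ℤ)) P (f + n i))
      ≤ ∑ _f ∈ P, ∑ _i : Fin e, e := by
  classical
  calc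
    _ = ∑ f ∈ P, ∑ i, (#(genSupport n (f + n i)) + #{k | F - (f + n i - n k) ∈ NS n} +
          shiftCount (fun i ↦ (n i : ℤ)) P (f + n i)) := by
      simp only [sum_add_distrib, sum_card_genSupport_reflect n hsymm, two_mul]
    _ ≤ _ := sum_le_sum fun f _ ↦ sum_le_sum fun i _ ↦
      card_genSupport_add_card_add_shiftCount_le hF hP hsymm _

theorem mul_five_sub_le_add_ite {σ : ℤ} (hσ : 1 ≤ σ) (r : ℕ) (d : ℤ) :
    r * (5 - d) ≤ r * (2 * σ + r - d) + if σ = 1 then 2 else 0 := by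
  split_ifs with hσ1
  · subst hσ1
    have hr : 0 ≤ ((r : ℤ) - 1) * (r - 2) := by
      rcases le_or_gt r 1 with hr1 | hr1
      · exact mul_nonneg_of_nonpos_of_nonpos (by lia) (by lia)
      · exact mul_nonneg (by lia) (by lia)
    linarith
  · rcases r.eq_zero_or_pos with rfl | hr
    · simp
    · rw [add_zero]
      exact mul_le_mul_of_nonneg_left (by lia) (by lia)

theorem five_sub_mul_card_le_two (he : 0 < e) (hF : F ∈ PF n) (hP : ∀ f ∈ P, f ∈ PF n)
    (hsymm : ∀ f ∈ P, F - f ∈ P) : (5 - e : ℤ) * #P ≤ 2 := by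
  let v : Fin e → ℤ := fun i ↦ n i
  let r := shiftCount v P
  let σ := fun s ↦ #(genSupport n s)
  have hweight : ∑ s ∈ shifts v P, (r s : ℤ) * (2 * σ s + r s - e) ≤ 0 := by
    have h := sum_two_mul_card_genSupport_add_shiftCount_le hF.1 (fun f hf ↦ (hP f hf).1) hsymm
    rw [sum_shiftCount_mul v P fun s ↦ (2 * σ s + r s - e : ℤ)]
    simp only [sum_sub_distrib]
    exact sub_nonpos.2 (mod_cast h)
  have hunique : (#{s ∈ shifts v P | σ s = 1} : ℤ) ≤ e := mod_cast card_genSupport_eq_one_le hP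
  have hmul : (e : ℤ) * ((5 - e) * #P) ≤ e * 2 := by
    calc (e : ℤ) * ((5 - e) * #P)
        = ∑ s ∈ shifts v P, (r s : ℤ) * (5 - e) := by
          rw [sum_shiftCount_mul v P fun _ ↦ (5 - e : ℤ)]
          simp only [sum_const, card_univ, Fintype.card_fin, nsmul_eq_mul]
          ring
      _ ≤ ∑ s ∈ shifts v P,
            ((r s : ℤ) * (2 * σ s + r s - e) + if (σ s : ℤ) = 1 then 2 else 0) :=
          sum_le_sum fun s hs ↦ mul_five_sub_le_add_ite
            (mod_cast card_pos.2 (genSupport_nonempty_of_mem_shifts hF hP hsymm hs)) (r s) e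
      _ = ∑ s ∈ shifts v P, (r s : ℤ) * (2 * σ s + r s - e) +
            #{s ∈ shifts v P | σ s = 1} * 2 := by
          rw [sum_add_distrib, ← sum_filter, sum_const, nsmul_eq_mul]
          norm_cast
      _ ≤ e * 2 := by linarith
  exact le_of_mul_le_mul_left hmul (mod_cast he)

end Counting

theorem stmt11_general {e : ℕ} (n : Fin e → ℕ) (hpos : ∀ i, 0 < n i) (F : ℤ) (hF : IsFrob n F)
    (hAS : AlmostSym n F) : (5 - e : ℤ) * ((PF n).ncard - 1) ≤ 2 := by
  have hFPF : F ∈ PF n := hF.mem_PF hpos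
  have hfin : (PF n \ {F}).Finite := hAS.finite_PF_sdiff hF
  have hcard : #hfin.toFinset = ((PF n).ncard - 1 : ℤ) := by
    rw [← Set.ncard_eq_toFinset_card _ hfin,
      ← Set.ncard_sdiff_singleton_add_one hFPF (hfin.of_sdiff (Set.finite_singleton F))]
    simp
  rw [← hcard]
  refine five_sub_mul_card_le_two hF.dim_pos hFPF (fun f hf ↦ ?_) fun f hf ↦ ?_
  · exact (hfin.mem_toFinset.1 hf).1
  · exact hfin.mem_toFinset.2 (hAS.sub_mem_PF_sdiff hF.1 (hfin.mem_toFinset.1 hf))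

theorem stmt11 (n : Fin 4 → ℕ)
    (hpos : ∀ i, 0 < n i)
    (hgcd : Finset.univ.gcd n = 1)
    (hmin : MinGen n)
    (F : ℤ) (hF : IsFrob n F) (hAS : AlmostSym n F) :
    (PF n).ncard ≤ 4 := by
  have := stmt11_general n hpos F hF hAS
  lia
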